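/- Let n ≥ 1, let Ω ⊆ ℝ^n be a convex set, let ψ : Ω → ℝ, and let g : Ω → ℝ^n satisfy the subgradient inequality ψ(b) ≥ ψ(a) + ⟨g(a), b − a⟩ for all a, b ∈ Ω. Define the Bregman divergence B(x, y) = ψ(x) − ψ(y) − ⟨g(y), x − y⟩ for x, y ∈ Ω. Then for all x, y ∈ Ω and every w ∈ [0,1], setting x^w = (1−w)x + wy (which lies in Ω): B(x, y) ≥ B(x^w, y) and B(x, y) ≥ B(x, x^w). -/

import Mathlib

open Finset

/-- The Bregman divergence `B(x,y) = ψ(x) - ψ(y) - ⟨g(y), x - y⟩` associated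
with `ψ` and a subgradient selection `g`. -/
noncomputable def Breg (n : ℕ) (ψ : (Fin n → ℝ) → ℝ)
    (g : (Fin n → ℝ) → Fin n → ℝ) (x y : Fin n → ℝ) : ℝ :=
  ψ x - ψ y - ∑ i, g y i * (x i - y i)

/-!
For all points `x`, `y`, `z`,
`B(x, y) = B(x, z) + B(z, y) + ⟨g(z) - g(y), x - z⟩`.
When `z` lies between `x` and `y`, the vector `x - z` points in the same direction as `z - y`, so
the last term is nonnegative by monotonicity of subgradients. Thus `B` is superadditive along
segments, and dropping either of the two nonnegative divergences gives the claim.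
-/

open Module

section

variable {𝕜 E : Type*} [CommRing 𝕜] [AddCommGroup E] [Module 𝕜 E]

/-- The Bregman divergence of `ψ` with respect to a field `g` of linear functionals, which plays
the role of the gradient of `ψ`. Taking `g` with values in the algebraic dual makes the notion
independent of any inner product or topology on `E`. -/
def bregmanDiv (ψ : E → 𝕜) (g : E → Dual 𝕜 E) (x y : E) : 𝕜 :=
  ψ x - ψ y - g y (x - y)

/-- `g` selects a subgradient of `ψ` at each point of `s`. The subgradient inequality is only
required against points of `s`, so that the values of `ψ` and `g` off `s` are irrelevant. -/
def IsSubgradientOn [LE 𝕜] (ψ : E → 𝕜) (g : E → Dual 𝕜 E) (s : Set E) : Prop :=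
  ∀ a ∈ s, ∀ b ∈ s, ψ a + g a (b - a) ≤ ψ b

theorem bregmanDiv_add_bregmanDiv_add (ψ : E → 𝕜) (g : E → Dual 𝕜 E) (x y z : E) :
    bregmanDiv ψ g x z + bregmanDiv ψ g z y + (g z - g y) (x - z) = bregmanDiv ψ g x y := by
  simp only [bregmanDiv, LinearMap.sub_apply, map_sub]
  ring

theorem bregmanDiv_add_bregmanDiv_swap (ψ : E → 𝕜) (g : E → Dual 𝕜 E) (x y : E) :
    bregmanDiv ψ g x y + bregmanDiv ψ g y x = (g x - g y) (x - y) := by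
  simp only [bregmanDiv, LinearMap.sub_apply, map_sub]
  ring

end

namespace IsSubgradientOn

variable {𝕜 E : Type*} [CommRing 𝕜] [AddCommGroup E] [Module 𝕜 E]
  {ψ : E → 𝕜} {g : E → Dual 𝕜 E} {s : Set E} {x y z : E}

theorem bregmanDiv_nonneg [PartialOrder 𝕜] [IsOrderedAddMonoid 𝕜] (h : IsSubgradientOn ψ g s)
    (hx : x ∈ s) (hy : y ∈ s) : 0 ≤ bregmanDiv ψ g x y := by
  rw [bregmanDiv, sub_sub, sub_nonneg]
  exact h y hy x hx

theorem sub_apply_sub_nonneg [PartialOrder 𝕜] [IsOrderedAddMonoid 𝕜] (h : IsSubgradientOn ψ g s)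
    (hx : x ∈ s) (hy : y ∈ s) : 0 ≤ (g x - g y) (x - y) := by
  rw [← bregmanDiv_add_bregmanDiv_swap ψ]
  exact add_nonneg (h.bregmanDiv_nonneg hx hy) (h.bregmanDiv_nonneg hy hx)

variable [LinearOrder 𝕜] [IsStrictOrderedRing 𝕜]

theorem sub_apply_nonneg_of_sameRay (h : IsSubgradientOn ψ g s) (hx : x ∈ s) (hy : y ∈ s) {v : E}
    (hv : SameRay 𝕜 v (x - y)) : 0 ≤ (g x - g y) v := by
  obtain rfl | hxy | ⟨r, t, hr, ht, hrt⟩ := hv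
  · rw [map_zero]
  · rw [sub_eq_zero.1 hxy, sub_self, LinearMap.zero_apply]
  · refine nonneg_of_mul_nonneg_right ?_ hr
    calc
      0 ≤ t * (g x - g y) (x - y) := mul_nonneg ht.le (h.sub_apply_sub_nonneg hx hy)
      _ = r * (g x - g y) v := by simp only [← smul_eq_mul, ← map_smul, hrt]

theorem bregmanDiv_add_bregmanDiv_le_of_mem_segment (h : IsSubgradientOn ψ g s) (hy : y ∈ s)
    (hz : z ∈ s) (hxyz : z ∈ segment 𝕜 x y) :
    bregmanDiv ψ g x z + bregmanDiv ψ g z y ≤ bregmanDiv ψ g x y := by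
  have hray : SameRay 𝕜 (x - z) (z - y) :=
    (sameRay_of_mem_segment (segment_symm 𝕜 x y ▸ hxyz)).symm
  rw [← bregmanDiv_add_bregmanDiv_add ψ g x y z]
  exact le_add_of_nonneg_right (h.sub_apply_nonneg_of_sameRay hz hy hray)

theorem bregmanDiv_le_of_mem_segment_left (h : IsSubgradientOn ψ g s) (hx : x ∈ s) (hy : y ∈ s)
    (hz : z ∈ s) (hxyz : z ∈ segment 𝕜 x y) : bregmanDiv ψ g z y ≤ bregmanDiv ψ g x y :=
  (le_add_of_nonneg_left (h.bregmanDiv_nonneg hx hz)).trans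
    (h.bregmanDiv_add_bregmanDiv_le_of_mem_segment hy hz hxyz)

theorem bregmanDiv_le_of_mem_segment_right (h : IsSubgradientOn ψ g s) (hy : y ∈ s)
    (hz : z ∈ s) (hxyz : z ∈ segment 𝕜 x y) : bregmanDiv ψ g x z ≤ bregmanDiv ψ g x y :=
  (le_add_of_nonneg_right (h.bregmanDiv_nonneg hz hy)).trans
    (h.bregmanDiv_add_bregmanDiv_le_of_mem_segment hy hz hxyz)

end IsSubgradientOn

theorem breg_eq_bregmanDiv (n : ℕ) (ψ : (Fin n → ℝ) → ℝ) (g : (Fin n → ℝ) → Fin n → ℝ)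
    (x y : Fin n → ℝ) :
    Breg n ψ g x y = bregmanDiv ψ (fun a ↦ dotProductBilin ℝ ℝ (g a)) x y :=
  rfl

theorem stmt19_general {𝕜 E : Type*} [CommRing 𝕜] [LinearOrder 𝕜] [IsStrictOrderedRing 𝕜]
    [AddCommGroup E] [Module 𝕜 E] {s : Set E} (hs : Convex 𝕜 s) {ψ : E → 𝕜} {g : E → Dual 𝕜 E}
    (hg : IsSubgradientOn ψ g s) {x y : E} (hx : x ∈ s) (hy : y ∈ s) {w : 𝕜}
    (hw : w ∈ Set.Icc (0 : 𝕜) 1) :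
    ((1 - w) • x + w • y) ∈ s ∧
    bregmanDiv ψ g ((1 - w) • x + w • y) y ≤ bregmanDiv ψ g x y ∧
    bregmanDiv ψ g x ((1 - w) • x + w • y) ≤ bregmanDiv ψ g x y := by
  have hseg : (1 - w) • x + w • y ∈ segment 𝕜 x y :=
    ⟨1 - w, w, sub_nonneg.2 hw.2, hw.1, sub_add_cancel 1 w, rfl⟩
  have hmem := hs.segment_subset hx hy hseg
  exact ⟨hmem, hg.bregmanDiv_le_of_mem_segment_left hx hy hmem hseg,
    hg.bregmanDiv_le_of_mem_segment_right hy hmem hseg⟩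

theorem stmt19 (n : ℕ) (hn : 1 ≤ n) (Ω : Set (Fin n → ℝ)) (hΩ : Convex ℝ Ω)
    (ψ : (Fin n → ℝ) → ℝ) (g : (Fin n → ℝ) → Fin n → ℝ)
    (hg : ∀ a ∈ Ω, ∀ b ∈ Ω, ψ a + ∑ i, g a i * (b i - a i) ≤ ψ b)
    (x : Fin n → ℝ) (hx : x ∈ Ω) (y : Fin n → ℝ) (hy : y ∈ Ω)
    (w : ℝ) (hw : w ∈ Set.Icc (0 : ℝ) 1) :
    ((1 - w) • x + w • y) ∈ Ω ∧
    Breg n ψ g ((1 - w) • x + w • y) y ≤ Breg n ψ g x y ∧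
    Breg n ψ g x ((1 - w) • x + w • y) ≤ Breg n ψ g x y := by
  simp only [breg_eq_bregmanDiv]
  exact stmt19_general (ψ := ψ) (g := fun a ↦ dotProductBilin ℝ ℝ (g a)) hΩ hg hx hy hw
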